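/- Remark 4.2 (boundary blow-up set): Let (u,v) be a classical solution of problem (1.1) that blows up at time T < ∞. There exists λ₀ > 0, depending only on n, R, T, ‖u₀‖_∞, ‖v₀‖_∞ and the constant C from the upper blow-up rate estimate e^{u(R,t)}, e^{v(R,t)} ≤ C/(T−t), such that if max{λ₁, λ₂} ≤ λ₀, then no interior point is a blow-up point: for every compact set K ⊂ B_R, u and v are bounded on K × (0,T). Consequently the blow-up set is contained in ∂B_R. -/

import Mathlib

open Set Real Metric MeasureTheory Filter Topology

/-- The Euclidean Laplacian of `f : ℝⁿ → ℝ` at `x`, computed as the sum of second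
directional derivatives along the coordinate directions. -/
noncomputable def lap {n : ℕ} (f : EuclideanSpace ℝ (Fin n) → ℝ)
    (x : EuclideanSpace ℝ (Fin n)) : ℝ :=
  ∑ i : Fin n, iteratedDeriv 2 (fun s : ℝ => f (x + s • EuclideanSpace.single i (1 : ℝ))) 0

/-- The outward normal derivative `∇f · (x/R)` on the sphere of radius `R`. -/
noncomputable def normalDeriv {n : ℕ} (R : ℝ) (f : EuclideanSpace ℝ (Fin n) → ℝ)
    (x : EuclideanSpace ℝ (Fin n)) : ℝ :=
  deriv (fun s : ℝ => f (x + s • (R⁻¹ • x))) 0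

/-- Admissible initial data for problem (1.1): nonnegative, smooth, radial with
nondecreasing radial profiles, and satisfying the compatibility conditions. -/
structure AdmissibleData (n : ℕ) (R : ℝ)
    (u₀ v₀ : EuclideanSpace ℝ (Fin n) → ℝ) : Prop where
  u0_nonneg : ∀ x ∈ closedBall (0 : EuclideanSpace ℝ (Fin n)) R, 0 ≤ u₀ x
  v0_nonneg : ∀ x ∈ closedBall (0 : EuclideanSpace ℝ (Fin n)) R, 0 ≤ v₀ x
  u0_smooth : ContDiffOn ℝ (⊤ : ℕ∞) u₀ (closedBall (0 : EuclideanSpace ℝ (Fin n)) R)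
  v0_smooth : ContDiffOn ℝ (⊤ : ℕ∞) v₀ (closedBall (0 : EuclideanSpace ℝ (Fin n)) R)
  u0_radial_mono : ∀ x ∈ closedBall (0 : EuclideanSpace ℝ (Fin n)) R,
    ∀ y ∈ closedBall (0 : EuclideanSpace ℝ (Fin n)) R, ‖x‖ ≤ ‖y‖ → u₀ x ≤ u₀ y
  v0_radial_mono : ∀ x ∈ closedBall (0 : EuclideanSpace ℝ (Fin n)) R,
    ∀ y ∈ closedBall (0 : EuclideanSpace ℝ (Fin n)) R, ‖x‖ ≤ ‖y‖ → v₀ x ≤ v₀ y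
  compat_u : ∀ x : EuclideanSpace ℝ (Fin n), ‖x‖ = R → normalDeriv R u₀ x = Real.exp (v₀ x)
  compat_v : ∀ x : EuclideanSpace ℝ (Fin n), ‖x‖ = R → normalDeriv R v₀ x = Real.exp (u₀ x)
  compat_u' : ∀ x ∈ closedBall (0 : EuclideanSpace ℝ (Fin n)) R, 0 ≤ lap u₀ x + Real.exp (v₀ x)
  compat_v' : ∀ x ∈ closedBall (0 : EuclideanSpace ℝ (Fin n)) R, 0 ≤ lap v₀ x + Real.exp (u₀ x)

/-- A classical solution of problem (1.1) on `[0,T)` on the ball of radius `R`: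
continuous on `cl(B_R) × [0,T)`, of class C²,¹ on `cl(B_R) × (0,T)`, satisfying the
equations `u_t = Δu + λ₁ e^v`, `v_t = Δv + λ₂ e^u` in `B_R × (0,T)`, the boundary
conditions `∂u/∂η = e^v`, `∂v/∂η = e^u` on `∂B_R × (0,T)`, and the initial conditions. -/
structure IsClassicalSolution (n : ℕ) (R T lam1 lam2 : ℝ)
    (u v : EuclideanSpace ℝ (Fin n) → ℝ → ℝ)
    (u₀ v₀ : EuclideanSpace ℝ (Fin n) → ℝ) : Prop where
  cont_u : ContinuousOn (fun p : EuclideanSpace ℝ (Fin n) × ℝ => u p.1 p.2)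
    ((closedBall (0 : EuclideanSpace ℝ (Fin n)) R) ×ˢ Ico (0 : ℝ) T)
  cont_v : ContinuousOn (fun p : EuclideanSpace ℝ (Fin n) × ℝ => v p.1 p.2)
    ((closedBall (0 : EuclideanSpace ℝ (Fin n)) R) ×ˢ Ico (0 : ℝ) T)
  reg_space_u : ∀ t ∈ Ioo (0 : ℝ) T,
    ContDiffOn ℝ 2 (fun x => u x t) (closedBall (0 : EuclideanSpace ℝ (Fin n)) R)
  reg_space_v : ∀ t ∈ Ioo (0 : ℝ) T,
    ContDiffOn ℝ 2 (fun x => v x t) (closedBall (0 : EuclideanSpace ℝ (Fin n)) R)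
  reg_time_u : ∀ x ∈ closedBall (0 : EuclideanSpace ℝ (Fin n)) R, ∀ t ∈ Ioo (0 : ℝ) T,
    DifferentiableAt ℝ (u x) t
  reg_time_v : ∀ x ∈ closedBall (0 : EuclideanSpace ℝ (Fin n)) R, ∀ t ∈ Ioo (0 : ℝ) T,
    DifferentiableAt ℝ (v x) t
  pde_u : ∀ x ∈ ball (0 : EuclideanSpace ℝ (Fin n)) R, ∀ t ∈ Ioo (0 : ℝ) T,
    deriv (u x) t = lap (fun y => u y t) x + lam1 * Real.exp (v x t)
  pde_v : ∀ x ∈ ball (0 : EuclideanSpace ℝ (Fin n)) R, ∀ t ∈ Ioo (0 : ℝ) T,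
    deriv (v x) t = lap (fun y => v y t) x + lam2 * Real.exp (u x t)
  bc_u : ∀ x : EuclideanSpace ℝ (Fin n), ‖x‖ = R → ∀ t ∈ Ioo (0 : ℝ) T,
    normalDeriv R (fun y => u y t) x = Real.exp (v x t)
  bc_v : ∀ x : EuclideanSpace ℝ (Fin n), ‖x‖ = R → ∀ t ∈ Ioo (0 : ℝ) T,
    normalDeriv R (fun y => v y t) x = Real.exp (u x t)
  init_u : ∀ x ∈ closedBall (0 : EuclideanSpace ℝ (Fin n)) R, u x 0 = u₀ x
  init_v : ∀ x ∈ closedBall (0 : EuclideanSpace ℝ (Fin n)) R, v x 0 = v₀ x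

/-- `(u,v)` blows up at time `T`: `limsup_{t→T⁻} sup_{cl(B_R)} (u(·,t) + v(·,t)) = ∞`. -/
def BlowsUpAt (n : ℕ) (R T : ℝ) (u v : EuclideanSpace ℝ (Fin n) → ℝ → ℝ) : Prop :=
  ∀ M : ℝ, ∃ᶠ t in 𝓝[<] T, ∃ x ∈ closedBall (0 : EuclideanSpace ℝ (Fin n)) R, M < u x t + v x t

/-- `x` is a blow-up point of `(u,v)` at time `T`: there exist sequences `x_k → x` in
`cl(B_R)` and `t_k → T⁻` with `u(x_k,t_k) → ∞` or `v(x_k,t_k) → ∞`. -/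
def IsBlowUpPoint (n : ℕ) (R T : ℝ) (u v : EuclideanSpace ℝ (Fin n) → ℝ → ℝ)
    (x : EuclideanSpace ℝ (Fin n)) : Prop :=
  ∃ (xs : ℕ → EuclideanSpace ℝ (Fin n)) (ts : ℕ → ℝ),
    (∀ k, xs k ∈ closedBall (0 : EuclideanSpace ℝ (Fin n)) R) ∧
    (∀ k, ts k ∈ Ioo (0 : ℝ) T) ∧
    Tendsto xs atTop (𝓝 x) ∧ Tendsto ts atTop (𝓝 T) ∧
    (Tendsto (fun k => u (xs k) (ts k)) atTop atTop ∨
     Tendsto (fun k => v (xs k) (ts k)) atTop atTop)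

/-!
The explicit function

  `w (x, t) = log A - log ((R² - |x|²)² + B (T - t))`

is finite up to and including time `T` at interior points, and it dominates the solution. Put
`z = (R² - |x|²)² + B (T - t)`. Then `∂ₜw = B / z`, and since `(R² - |x|²)² ≤ z`,

  `Δw = (4n (R² - |x|²) - 8 |x|²) / z + 16 (R² - |x|²)² |x|² / z² ≤ (4n + 8) R² / z`,

while `exp w = A / z`. Hence `w` is a strict supersolution of `∂ₜw = Δw + λ exp w` as soon as
`(4n + 8) R² + λ A < B`. On the sphere `exp w = A / (B (T - t))`, so `w` lies above the assumed
blow-up rate there when `A > B C`, and a large `A` also puts `w` above the initial data. Fixing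
`B = (4n + 8) R² + 2` and then `A`, the choice `λ₀ = 1 / A` excludes a first contact of
`max u v` with `w`. From below, `u` and `v` stay above their initial minima, because they are
supersolutions of the heat equation with positive flux through the sphere.
-/

/-! ### One-variable calculus -/

lemma nonneg_of_isLocalMaxOn_Iic {g : ℝ → ℝ} {g' a : ℝ} (hg : HasDerivAt g g' a)
    (h : IsLocalMaxOn g (Iic a) a) : 0 ≤ g' := by
  have hneg : (-1 : ℝ) ∈ posTangentConeAt (Iic a) a :=
    mem_posTangentConeAt_of_frequently_mem <| Eventually.frequently <| by
      filter_upwards [self_mem_nhdsWithin] with s (hs : 0 < s)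
      simpa using hs.le
  simpa using h.hasFDerivWithinAt_nonpos hg.hasFDerivAt.hasFDerivWithinAt hneg

lemma iteratedDeriv_two_nonpos_of_isLocalMax {g : ℝ → ℝ} {a : ℝ} (hg : ContinuousAt g a)
    (h : IsLocalMax g a) : iteratedDeriv 2 g a ≤ 0 := by
  rw [iteratedDeriv_succ, iteratedDeriv_one]
  by_contra! hpos
  -- The second derivative test makes `a` a local minimum too, so `g` is locally constant.
  have hmin : IsLocalMin g a := isLocalMin_of_deriv_deriv_pos hpos h.deriv_eq_zero hg
  have hconst : g =ᶠ[𝓝 a] fun _ => g a := by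
    filter_upwards [h, hmin] with y hy hy' using le_antisymm hy hy'
  have hzero : deriv (deriv g) a = 0 := by simpa using hconst.deriv.deriv_eq
  exact hpos.ne' hzero

lemma iteratedDeriv_two_eq_of_hasDerivAt {f f' : ℝ → ℝ} {f'' a : ℝ}
    (hf : ∀ᶠ s in 𝓝 a, HasDerivAt f (f' s) s) (hf' : HasDerivAt f' f'' a) :
    iteratedDeriv 2 f a = f'' := by
  have hderiv : deriv f =ᶠ[𝓝 a] f' := hf.mono fun _ h => h.deriv
  rw [iteratedDeriv_succ, iteratedDeriv_one, hderiv.deriv_eq, hf'.deriv]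

/-! ### The Laplacian and the normal derivative at extrema -/

section Spatial

variable {n : ℕ} {x : EuclideanSpace ℝ (Fin n)}

lemma lap_const (c : ℝ) : lap (fun _ => c) x = 0 := by
  simp [lap, iteratedDeriv_const]

lemma lap_sub {f g : EuclideanSpace ℝ (Fin n) → ℝ} (hf : ContDiffAt ℝ 2 f x)
    (hg : ContDiffAt ℝ 2 g x) : lap (fun y => f y - g y) x = lap f x - lap g x := by
  have hslice {h : EuclideanSpace ℝ (Fin n) → ℝ} (hh : ContDiffAt ℝ 2 h x) (i : Fin n) :
      ContDiffAt ℝ 2 (fun s : ℝ => h (x + s • EuclideanSpace.single i (1 : ℝ))) 0 :=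
    ContDiffAt.comp (0 : ℝ) (by simpa using hh) (by fun_prop)
  simp only [lap, ← Finset.sum_sub_distrib]
  exact Finset.sum_congr rfl fun i _ => iteratedDeriv_sub (hslice hf i) (hslice hg i)

lemma lap_nonpos_of_isLocalMax {f : EuclideanSpace ℝ (Fin n) → ℝ} (hf : ContinuousAt f x)
    (h : IsLocalMax f x) : lap f x ≤ 0 := by
  refine Finset.sum_nonpos fun i _ => ?_
  have hline : ContinuousAt (fun s : ℝ => x + s • EuclideanSpace.single i (1 : ℝ)) 0 := by
    fun_prop
  have hline₀ : x + (0 : ℝ) • EuclideanSpace.single i (1 : ℝ) = x := by simp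
  refine iteratedDeriv_two_nonpos_of_isLocalMax
    (ContinuousAt.comp_of_eq hf hline hline₀) ?_
  have htend := hline.tendsto
  rw [hline₀] at htend
  filter_upwards [htend.eventually h] with s hs
  rwa [hline₀]

lemma lap_le_lap_of_isLocalMax_sub {f g : EuclideanSpace ℝ (Fin n) → ℝ}
    (hf : ContDiffAt ℝ 2 f x) (hg : ContDiffAt ℝ 2 g x) (h : IsLocalMax (fun y => f y - g y) x) :
    lap f x ≤ lap g x := by
  rw [← sub_nonpos, ← lap_sub hf hg]
  exact lap_nonpos_of_isLocalMax (hf.continuousAt.sub hg.continuousAt) h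

lemma normalDeriv_nonpos_of_isMinOn {R : ℝ} {f : EuclideanSpace ℝ (Fin n) → ℝ}
    (hx : x ∈ closedBall 0 R) (h : IsMinOn f (closedBall 0 R) x) : normalDeriv R f x ≤ 0 := by
  by_cases hd : DifferentiableAt ℝ (fun s : ℝ => f (x + s • (R⁻¹ • x))) 0
  · refine neg_nonneg.1 (nonneg_of_isLocalMaxOn_Iic hd.hasDerivAt.neg ?_)
    have hR : 0 ≤ R⁻¹ := inv_nonneg.2 (nonempty_closedBall.1 ⟨x, hx⟩)
    have hsmall : ∀ᶠ s : ℝ in 𝓝 0, -1 < s * R⁻¹ :=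
      ContinuousAt.eventually_lt (by fun_prop) (by fun_prop) (by simp)
    filter_upwards [nhdsWithin_le_nhds hsmall, self_mem_nhdsWithin] with s hs (hs₀ : s ≤ 0)
    have hcoef : ‖1 + s * R⁻¹‖ ≤ 1 := by
      rw [Real.norm_eq_abs, abs_le]
      constructor <;> linarith [mul_nonpos_of_nonpos_of_nonneg hs₀ hR]
    have hmem : x + s • (R⁻¹ • x) ∈ closedBall 0 R := by
      rw [show x + s • (R⁻¹ • x) = (1 + s * R⁻¹) • x by module]
      exact balanced_closedBall_zero.smul_mem hcoef hx
    simpa using h hmem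
  · exact (deriv_zero_of_not_differentiableAt hd).le

lemma norm_sq_add_smul_single (x : EuclideanSpace ℝ (Fin n)) (i : Fin n) (s : ℝ) :
    ‖x + s • EuclideanSpace.single i (1 : ℝ)‖ ^ 2 = ‖x‖ ^ 2 + 2 * x i * s + s ^ 2 := by
  rw [norm_add_sq_real, inner_smul_right, EuclideanSpace.inner_single_right, norm_smul]
  simp
  ring

lemma iteratedDeriv_two_comp_quadratic {φ φ' : ℝ → ℝ} {φ'' r : ℝ} (c : ℝ)
    (hφ : ∀ᶠ ρ in 𝓝 r, HasDerivAt φ (φ' ρ) ρ) (hφ' : HasDerivAt φ' φ'' r) :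
    iteratedDeriv 2 (fun s : ℝ => φ (r + 2 * c * s + s ^ 2)) 0 = 2 * φ' r + 4 * c ^ 2 * φ'' := by
  have hq (s : ℝ) : HasDerivAt (fun s : ℝ => r + 2 * c * s + s ^ 2) (2 * c + 2 * s) s :=
    ((((hasDerivAt_id s).const_mul (2 * c)).const_add r).add (hasDerivAt_pow 2 s)).congr_deriv
      (by simp)
  have hq₀ : Tendsto (fun s : ℝ => r + 2 * c * s + s ^ 2) (𝓝 0) (𝓝 r) := by
    simpa using (hq 0).continuousAt.tendsto
  have hlin : HasDerivAt (fun s : ℝ => 2 * c + 2 * s) 2 0 := by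
    simpa using ((hasDerivAt_id (0 : ℝ)).const_mul 2).const_add (2 * c)
  have hφ'q : HasDerivAt (fun s : ℝ => φ' (r + 2 * c * s + s ^ 2)) (φ'' * (2 * c)) 0 :=
    (HasDerivAt.comp (0 : ℝ) (by simpa using hφ') (hq 0)).congr_deriv (by simp)
  refine iteratedDeriv_two_eq_of_hasDerivAt
    ((hq₀.eventually hφ).mono fun s hs => hs.comp s (hq s)) ((hφ'q.mul hlin).congr_deriv ?_)
  simp
  ring

lemma lap_comp_norm_sq {φ φ' : ℝ → ℝ} {φ'' : ℝ}
    (hφ : ∀ᶠ ρ in 𝓝 (‖x‖ ^ 2), HasDerivAt φ (φ' ρ) ρ) (hφ' : HasDerivAt φ' φ'' (‖x‖ ^ 2)) :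
    lap (fun y => φ (‖y‖ ^ 2)) x = 2 * n * φ' (‖x‖ ^ 2) + 4 * ‖x‖ ^ 2 * φ'' := by
  simp only [lap, norm_sq_add_smul_single, iteratedDeriv_two_comp_quadratic _ hφ hφ']
  have hsum : ∑ i, x i ^ 2 = ‖x‖ ^ 2 := by simp [EuclideanSpace.norm_sq_eq]
  have hsum' : ∑ i, 4 * x i ^ 2 * φ'' = 4 * ‖x‖ ^ 2 * φ'' := by
    rw [← Finset.sum_mul, ← Finset.mul_sum, hsum]
  rw [Finset.sum_add_distrib, hsum']
  simp
  ring

end Spatial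

/-! ### First contacts -/

section FirstContact

lemma neg_of_forall_nonpos_imp_neg {X : Type*} [TopologicalSpace X] [T2Space X] {K : Set X}
    (hK : IsCompact K) {a b : ℝ} {F : X → ℝ → ℝ}
    (hF : ContinuousOn (fun p : X × ℝ => F p.1 p.2) (K ×ˢ Ico a b)) (ha : ∀ x ∈ K, F x a < 0)
    (hstep : ∀ x ∈ K, ∀ t ∈ Ioo a b, (∀ y ∈ K, ∀ s ∈ Icc a t, F y s ≤ 0) → F x t < 0) :
    ∀ x ∈ K, ∀ t ∈ Ico a b, F x t < 0 := by
  intro x₁ hx₁ t₁ ht₁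
  by_contra! hcontact
  have hF₁ : ContinuousOn (fun p : X × ℝ => F p.1 p.2) (K ×ˢ Icc a t₁) :=
    hF.mono (prod_mono_right (Icc_subset_Ico_right ht₁.2))
  have hQ : IsCompact (K ×ˢ Icc a t₁) := hK.prod isCompact_Icc
  have hS : IsCompact (K ×ˢ Icc a t₁ ∩ (fun p : X × ℝ => F p.1 p.2) ⁻¹' Ici 0) :=
    hQ.of_isClosed_subset (hF₁.preimage_isClosed_of_isClosed hQ.isClosed isClosed_Ici)
      inter_subset_left
  obtain ⟨⟨x, t⟩, ⟨⟨hx, hat, htt₁⟩, hFxt⟩, hfirst⟩ :=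
    hS.exists_isMinOn ⟨(x₁, t₁), ⟨hx₁, ht₁.1, le_rfl⟩, hcontact⟩ continuousOn_snd
  simp only at hx hat htt₁
  replace hFxt : 0 ≤ F x t := hFxt
  have hat' : a < t := hat.lt_of_ne fun h => (ha x hx).not_ge (h ▸ hFxt)
  have hpast : ∀ y ∈ K, ∀ s ∈ Ico a t, F y s ≤ 0 := by
    intro y hy s hs
    by_contra! hpos
    exact hs.2.not_ge (hfirst (a := (y, s)) ⟨⟨hy, hs.1, hs.2.le.trans htt₁⟩, hpos.le⟩)
  refine (hstep x hx t ⟨hat', htt₁.trans_lt ht₁.2⟩ fun y hy s hs => ?_).not_ge hFxt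
  rw [← closure_Ico hat'.ne] at hs
  refine le_on_closure (hpast y hy) ?_ continuousOn_const hs
  rw [closure_Ico hat'.ne]
  exact hF₁.comp (f := fun τ => (y, τ)) (by fun_prop) fun τ hτ => ⟨hy, hτ.1, hτ.2.trans htt₁⟩

variable {n : ℕ}

/-- The heat operator `∂ₜf - Δf`, so that `0 ≤ heatOp f` says that `f` is a supersolution of the
heat equation. -/
noncomputable def heatOp (f : EuclideanSpace ℝ (Fin n) → ℝ → ℝ) (x : EuclideanSpace ℝ (Fin n))
    (t : ℝ) : ℝ :=
  deriv (f x) t - lap (fun y => f y t) x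

lemma heatOp_le_heatOp_of_contact {f g : EuclideanSpace ℝ (Fin n) → ℝ → ℝ}
    {K : Set (EuclideanSpace ℝ (Fin n))} {x : EuclideanSpace ℝ (Fin n)} {a t : ℝ}
    (hK : K ∈ 𝓝 x) (hat : a < t)
    (hfx : ContDiffAt ℝ 2 (fun y => f y t) x) (hgx : ContDiffAt ℝ 2 (fun y => g y t) x)
    (hft : DifferentiableAt ℝ (f x) t) (hgt : DifferentiableAt ℝ (g x) t)
    (hle : ∀ y ∈ K, ∀ s ∈ Icc a t, f y s ≤ g y s) (heq : f x t = g x t) :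
    heatOp g x t ≤ heatOp f x t := by
  have hlap : lap (fun y => f y t) x ≤ lap (fun y => g y t) x := by
    refine lap_le_lap_of_isLocalMax_sub hfx hgx ?_
    filter_upwards [hK] with y hy
    linarith [hle y hy t ⟨hat.le, le_rfl⟩]
  have hderiv : 0 ≤ deriv (f x) t - deriv (g x) t := by
    refine nonneg_of_isLocalMaxOn_Iic (hft.hasDerivAt.sub hgt.hasDerivAt) ?_
    filter_upwards [Icc_mem_nhdsLE hat] with s hs
    simp only [Pi.sub_apply]
    linarith [hle x (mem_of_mem_nhds hK) s hs]
  simp only [heatOp]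
  linarith

lemma le_of_heatOp_nonneg {R T m : ℝ} {f : EuclideanSpace ℝ (Fin n) → ℝ → ℝ}
    (hcont : ContinuousOn (fun p : EuclideanSpace ℝ (Fin n) × ℝ => f p.1 p.2)
      (closedBall 0 R ×ˢ Ico 0 T))
    (hspace : ∀ t ∈ Ioo 0 T, ContDiffOn ℝ 2 (fun x => f x t) (closedBall 0 R))
    (htime : ∀ x ∈ closedBall 0 R, ∀ t ∈ Ioo 0 T, DifferentiableAt ℝ (f x) t)
    (hheat : ∀ x ∈ ball 0 R, ∀ t ∈ Ioo 0 T, 0 ≤ heatOp f x t)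
    (hflux : ∀ x, ‖x‖ = R → ∀ t ∈ Ioo 0 T, 0 < normalDeriv R (fun y => f y t) x)
    (hinit : ∀ x ∈ closedBall 0 R, m ≤ f x 0) :
    ∀ x ∈ closedBall 0 R, ∀ t ∈ Ico 0 T, m ≤ f x t := by
  -- Below the level `m` put the strict subsolution `m - ε (1 + t)`, and let `ε → 0`.
  have hstrict : ∀ ε > 0, ∀ x ∈ closedBall 0 R, ∀ t ∈ Ico 0 T, m - ε * (1 + t) - f x t < 0 := by
    intro ε hε
    refine neg_of_forall_nonpos_imp_neg (isCompact_closedBall _ _)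
      (ContinuousOn.sub (by fun_prop) hcont) (fun x hx => by linarith [hinit x hx]) ?_
    intro x hx t ht hle
    refine (hle x hx t ⟨ht.1.le, le_rfl⟩).lt_of_ne fun heq => ?_
    rcases (mem_closedBall_zero_iff.1 hx).eq_or_lt with hxR | hxR
    · refine (hflux x hxR t ht).not_ge (normalDeriv_nonpos_of_isMinOn hx fun y hy => ?_)
      have := hle y hy t ⟨ht.1.le, le_rfl⟩
      simp only [mem_ofPred_eq]
      linarith
    · have hK : closedBall 0 R ∈ 𝓝 x := closedBall_mem_nhds_of_mem (mem_ball_zero_iff.2 hxR)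
      have hline : HasDerivAt (fun s : ℝ => m - ε * (1 + s)) (-ε) t := by
        simpa using (((hasDerivAt_id t).const_add 1).const_mul ε).const_sub m
      have hcontact := heatOp_le_heatOp_of_contact (f := fun _ s => m - ε * (1 + s)) hK ht.1
        contDiffAt_const ((hspace t ht).contDiffAt hK) hline.differentiableAt (htime x hx t ht)
        (fun y hy s hs => sub_nonpos.1 (hle y hy s hs)) (sub_eq_zero.1 heq)
      simp only [heatOp, hline.deriv, lap_const] at hcontact
      have := hheat x (mem_ball_zero_iff.2 hxR) t ht
      simp only [heatOp] at this
      linarith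
  intro x hx t ht
  refine le_of_forall_pos_lt_add fun δ hδ => ?_
  have ht₁ : 0 < 1 + t := by linarith [ht.1]
  have := hstrict (δ / (1 + t)) (by positivity) x hx t ht
  rw [div_mul_cancel₀ _ ht₁.ne'] at this
  linarith

end FirstContact

/-! ### The barrier -/

section Barrier

variable {n : ℕ} {R T A B t : ℝ} {x : EuclideanSpace ℝ (Fin n)}

/-- The denominator `z = (R² - |x|²)² + B (T - t)` in `exp w = A / z` for the barrier `w`; among
the points of the closed ball it vanishes at time `T` exactly on the sphere. -/
noncomputable def barrierDenom (R T B : ℝ) (x : EuclideanSpace ℝ (Fin n)) (t : ℝ) : ℝ :=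
  (R ^ 2 - ‖x‖ ^ 2) ^ 2 + B * (T - t)

/-- The barrier `w = log (A / z)` bounding solutions from above, where `z` is `barrierDenom`. -/
noncomputable def barrier (R T A B : ℝ) (x : EuclideanSpace ℝ (Fin n)) (t : ℝ) : ℝ :=
  Real.log A - Real.log (barrierDenom R T B x t)

lemma barrierDenom_pos (hB : 0 < B) (ht : t < T) : 0 < barrierDenom R T B x t := by
  have := mul_pos hB (sub_pos.2 ht)
  unfold barrierDenom
  positivity

lemma barrierDenom_pos_of_norm_lt (hB : 0 ≤ B) (ht : t ≤ T) (hx : ‖x‖ < R) :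
    0 < barrierDenom R T B x t := by
  have : 0 < R ^ 2 - ‖x‖ ^ 2 := sub_pos.2 (by gcongr)
  have := mul_nonneg hB (sub_nonneg.2 ht)
  unfold barrierDenom
  positivity

lemma barrierDenom_le (hx : ‖x‖ ≤ R) : barrierDenom R T B x t ≤ R ^ 4 + B * (T - t) := by
  have hxR : ‖x‖ ^ 2 ≤ R ^ 2 := by gcongr
  have : (R ^ 2 - ‖x‖ ^ 2) ^ 2 ≤ (R ^ 2) ^ 2 :=
    pow_le_pow_left₀ (sub_nonneg.2 hxR) (sub_le_self _ (by positivity)) 2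
  unfold barrierDenom
  linarith [pow_mul R 2 2]

lemma exp_barrier (hA : 0 < A) (hz : 0 < barrierDenom R T B x t) :
    Real.exp (barrier R T A B x t) = A / barrierDenom R T B x t := by
  rw [barrier, Real.exp_sub, Real.exp_log hA, Real.exp_log hz]

lemma hasDerivAt_barrier (hz : barrierDenom R T B x t ≠ 0) :
    HasDerivAt (barrier R T A B x) (B / barrierDenom R T B x t) t := by
  have hdenom : HasDerivAt (barrierDenom R T B x) (-B) t :=
    ((((hasDerivAt_id t).const_sub T).const_mul B).const_add _).congr_deriv (by simp)
  exact ((hdenom.log hz).const_sub (Real.log A)).congr_deriv (by ring)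

lemma contDiffAt_barrier (hz : barrierDenom R T B x t ≠ 0) :
    ContDiffAt ℝ 2 (fun y => barrier R T A B y t) x := by
  have hdenom : ContDiffAt ℝ 2 (fun y => barrierDenom R T B y t) x :=
    ((contDiffAt_const.sub (contDiff_norm_sq ℝ).contDiffAt).pow 2).add contDiffAt_const
  exact contDiffAt_const.sub (hdenom.log hz)

lemma continuousOn_barrier (hB : 0 < B) :
    ContinuousOn (fun p : EuclideanSpace ℝ (Fin n) × ℝ => barrier R T A B p.1 p.2)
      (closedBall 0 R ×ˢ Ico 0 T) := by
  have hdenom : Continuous fun p : EuclideanSpace ℝ (Fin n) × ℝ => barrierDenom R T B p.1 p.2 := by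
    unfold barrierDenom
    fun_prop
  exact continuousOn_const.sub
    (hdenom.continuousOn.log fun p hp => (barrierDenom_pos hB hp.2.2).ne')

lemma lap_barrier (hb : 0 < B * (T - t)) :
    lap (fun y => barrier R T A B y t) x =
      (4 * n * (R ^ 2 - ‖x‖ ^ 2) - 8 * ‖x‖ ^ 2) / barrierDenom R T B x t +
        16 * (R ^ 2 - ‖x‖ ^ 2) ^ 2 * ‖x‖ ^ 2 / barrierDenom R T B x t ^ 2 := by
  have hz (ρ : ℝ) : (R ^ 2 - ρ) ^ 2 + B * (T - t) ≠ 0 := by positivity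
  have ha (ρ : ℝ) : HasDerivAt (fun ρ => R ^ 2 - ρ) (-1) ρ := (hasDerivAt_id ρ).const_sub _
  have hdenom (ρ : ℝ) :
      HasDerivAt (fun ρ => (R ^ 2 - ρ) ^ 2 + B * (T - t)) (-(2 * (R ^ 2 - ρ))) ρ :=
    (((ha ρ).pow 2).add_const _).congr_deriv (by simp)
  have hφ (ρ : ℝ) :
      HasDerivAt (fun ρ => Real.log A - Real.log ((R ^ 2 - ρ) ^ 2 + B * (T - t)))
        (2 * (R ^ 2 - ρ) / ((R ^ 2 - ρ) ^ 2 + B * (T - t))) ρ :=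
    (((hdenom ρ).log (hz ρ)).const_sub _).congr_deriv (by ring)
  have hφ' := (((ha (‖x‖ ^ 2)).const_mul 2).div (hdenom (‖x‖ ^ 2)) (hz (‖x‖ ^ 2)))
  have hlap := lap_comp_norm_sq (.of_forall hφ) hφ'
  simp only [barrier, barrierDenom, hlap]
  have := hz (‖x‖ ^ 2)
  field_simp
  ring

lemma lap_barrier_le (hb : 0 < B * (T - t)) (hx : ‖x‖ ≤ R) :
    lap (fun y => barrier R T A B y t) x ≤ (4 * n + 8) * R ^ 2 / barrierDenom R T B x t := by
  rw [lap_barrier hb]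
  set z := barrierDenom R T B x t
  have hsq : (R ^ 2 - ‖x‖ ^ 2) ^ 2 ≤ z := le_add_of_nonneg_right hb.le
  have hz : 0 < z := add_pos_of_nonneg_of_pos (sq_nonneg _) hb
  have hxR : ‖x‖ ^ 2 ≤ R ^ 2 := by gcongr
  have hnx : 0 ≤ (n : ℝ) * ‖x‖ ^ 2 := by positivity
  calc (4 * n * (R ^ 2 - ‖x‖ ^ 2) - 8 * ‖x‖ ^ 2) / z +
        16 * (R ^ 2 - ‖x‖ ^ 2) ^ 2 * ‖x‖ ^ 2 / z ^ 2
      ≤ (4 * n * (R ^ 2 - ‖x‖ ^ 2) - 8 * ‖x‖ ^ 2) / z + 16 * z * ‖x‖ ^ 2 / z ^ 2 := by gcongr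
    _ = (4 * n * (R ^ 2 - ‖x‖ ^ 2) + 8 * ‖x‖ ^ 2) / z := by
        field_simp
        ring
    _ ≤ (4 * n + 8) * R ^ 2 / z := by
        gcongr
        linarith

lemma mul_exp_barrier_lt_heatOp {lam : ℝ} (hA : 0 < A) (hB : 0 < B) (ht : t < T) (hx : ‖x‖ ≤ R)
    (hlam : (4 * n + 8) * R ^ 2 + lam * A < B) :
    lam * Real.exp (barrier R T A B x t) < heatOp (barrier R T A B) x t := by
  have hz : 0 < barrierDenom R T B x t := barrierDenom_pos hB ht
  have hlap := lap_barrier_le (A := A) (mul_pos hB (sub_pos.2 ht)) hx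
  rw [heatOp, (hasDerivAt_barrier hz.ne').deriv, exp_barrier hA hz]
  calc lam * (A / barrierDenom R T B x t)
      < (B - (4 * n + 8) * R ^ 2) / barrierDenom R T B x t := by
        rw [← mul_div_assoc]
        gcongr
        linarith
    _ ≤ _ := by
        rw [sub_div]
        gcongr

lemma lt_barrier_of_norm_eq {C w : ℝ} (hA : 0 < A) (hB : 0 < B) (hBC : B * C < A) (ht : t < T)
    (hx : ‖x‖ = R) (hw : Real.exp w ≤ C / (T - t)) : w < barrier R T A B x t := by
  have : 0 < T - t := sub_pos.2 ht
  rw [← Real.exp_lt_exp, exp_barrier hA (barrierDenom_pos hB ht)]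
  calc Real.exp w ≤ B * C / (B * (T - t)) := by rwa [mul_div_mul_left _ _ hB.ne']
    _ < A / (B * (T - t)) := by gcongr
    _ = A / barrierDenom R T B x t := by simp [barrierDenom, hx]

lemma lt_barrier_of_exp_mul_lt {w : ℝ} (hA : 0 < A) (hB : 0 < B) (ht : t < T) (hx : ‖x‖ ≤ R)
    (hw : Real.exp w * (R ^ 4 + B * (T - t)) < A) : w < barrier R T A B x t := by
  have hz : 0 < barrierDenom R T B x t := barrierDenom_pos hB ht
  rw [← Real.exp_lt_exp, exp_barrier hA hz, lt_div_iff₀ hz]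
  exact (by gcongr; exact barrierDenom_le hx : _ ≤ _).trans_lt hw

lemma barrier_le_barrier_final (hB : 0 ≤ B) (ht : t ≤ T) (hx : ‖x‖ < R) :
    barrier R T A B x t ≤ barrier R T A B x T := by
  have := Real.log_le_log (barrierDenom_pos_of_norm_lt hB le_rfl hx)
    (show barrierDenom R T B x T ≤ barrierDenom R T B x t by unfold barrierDenom; gcongr)
  unfold barrier
  linarith

lemma exists_barrier_le_of_isCompact (hB : 0 ≤ B) {K : Set (EuclideanSpace ℝ (Fin n))}
    (hK : IsCompact K) (hKR : K ⊆ ball 0 R) :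
    ∃ M, ∀ x ∈ K, ∀ t ≤ T, barrier R T A B x t ≤ M := by
  have hlt {x} (hx : x ∈ K) : ‖x‖ < R := mem_ball_zero_iff.1 (hKR hx)
  have hcont : ContinuousOn (fun x => barrier R T A B x T) K := fun x hx =>
    (contDiffAt_barrier (barrierDenom_pos_of_norm_lt hB le_rfl (hlt hx)).ne').continuousAt
      |>.continuousWithinAt
  obtain ⟨M, hM⟩ := hK.bddAbove_image hcont
  exact ⟨M, fun x hx t ht =>
    (barrier_le_barrier_final hB ht (hlt hx)).trans (hM (mem_image_of_mem _ hx))⟩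

end Barrier

/-! ### Bounds for solutions -/

namespace IsClassicalSolution

variable {n : ℕ} {R T lam1 lam2 A B : ℝ} {u v : EuclideanSpace ℝ (Fin n) → ℝ → ℝ}
  {u₀ v₀ : EuclideanSpace ℝ (Fin n) → ℝ}

lemma swap (hs : IsClassicalSolution n R T lam1 lam2 u v u₀ v₀) :
    IsClassicalSolution n R T lam2 lam1 v u v₀ u₀ where
  cont_u := hs.cont_v
  cont_v := hs.cont_u
  reg_space_u := hs.reg_space_v
  reg_space_v := hs.reg_space_u
  reg_time_u := hs.reg_time_v
  reg_time_v := hs.reg_time_u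
  pde_u := hs.pde_v
  pde_v := hs.pde_u
  bc_u := hs.bc_v
  bc_v := hs.bc_u
  init_u := hs.init_v
  init_v := hs.init_u

lemma heatOp_eq (hs : IsClassicalSolution n R T lam1 lam2 u v u₀ v₀)
    {x : EuclideanSpace ℝ (Fin n)} (hx : x ∈ ball 0 R) {t : ℝ} (ht : t ∈ Ioo 0 T) :
    heatOp u x t = lam1 * Real.exp (v x t) :=
  sub_eq_iff_eq_add'.2 (hs.pde_u x hx t ht)

lemma exists_forall_le (hs : IsClassicalSolution n R T lam1 lam2 u v u₀ v₀) (hT : 0 < T)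
    (hlam1 : 0 ≤ lam1) : ∃ m, ∀ x ∈ closedBall 0 R, ∀ t ∈ Ico 0 T, m ≤ u x t := by
  have hcont : ContinuousOn (fun x => u x 0) (closedBall 0 R) :=
    hs.cont_u.comp (f := fun x => (x, (0 : ℝ))) (by fun_prop) fun x hx => ⟨hx, le_rfl, hT⟩
  obtain ⟨m, hm⟩ := (isCompact_closedBall _ _).bddBelow_image hcont
  refine ⟨m, le_of_heatOp_nonneg hs.cont_u hs.reg_space_u hs.reg_time_u (fun x hx t ht => ?_)
    (fun x hx t ht => ?_) fun x hx => hm (mem_image_of_mem _ hx)⟩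
  · rw [hs.heatOp_eq hx ht]
    positivity
  · rw [hs.bc_u x hx t ht]
    positivity

lemma lt_barrier_of_forall_le (hs : IsClassicalSolution n R T lam1 lam2 u v u₀ v₀)
    (hA : 0 < A) (hB : 0 < B) (hlam1 : 0 ≤ lam1) (hlamB : (4 * n + 8) * R ^ 2 + lam1 * A < B)
    {x : EuclideanSpace ℝ (Fin n)} (hx : x ∈ ball 0 R) {t : ℝ} (ht : t ∈ Ioo 0 T)
    (hu : ∀ y ∈ closedBall 0 R, ∀ s ∈ Icc 0 t, u y s ≤ barrier R T A B y s)
    (hv : v x t ≤ barrier R T A B x t) : u x t < barrier R T A B x t := by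
  have hx' : x ∈ closedBall 0 R := ball_subset_closedBall hx
  refine (hu x hx' t ⟨ht.1.le, le_rfl⟩).lt_of_ne fun heq => ?_
  have hK : closedBall 0 R ∈ 𝓝 x := closedBall_mem_nhds_of_mem hx
  have hz : barrierDenom R T B x t ≠ 0 := (barrierDenom_pos hB ht.2).ne'
  have hcontact : heatOp (barrier R T A B) x t ≤ heatOp u x t :=
    heatOp_le_heatOp_of_contact hK ht.1 ((hs.reg_space_u t ht).contDiffAt hK)
      (contDiffAt_barrier hz) (hs.reg_time_u x hx' t ht)
      (hasDerivAt_barrier hz).differentiableAt hu heq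
  refine hcontact.not_gt ?_
  calc heatOp u x t = lam1 * Real.exp (v x t) := hs.heatOp_eq hx ht
    _ ≤ lam1 * Real.exp (barrier R T A B x t) := by gcongr
    _ < heatOp (barrier R T A B) x t :=
        mul_exp_barrier_lt_heatOp hA hB ht.2 (mem_closedBall_zero_iff.1 hx') hlamB

lemma lt_barrier (hs : IsClassicalSolution n R T lam1 lam2 u v u₀ v₀) (hA : 0 < A) (hB : 0 < B)
    (hlam1 : 0 ≤ lam1) (hlam2 : 0 ≤ lam2) (hlamB : (4 * n + 8) * R ^ 2 + max lam1 lam2 * A < B)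
    (hinit : ∀ x ∈ closedBall 0 R, u x 0 < barrier R T A B x 0 ∧ v x 0 < barrier R T A B x 0)
    (hsphere : ∀ t ∈ Ioo 0 T, ∀ x, ‖x‖ = R →
      u x t < barrier R T A B x t ∧ v x t < barrier R T A B x t) :
    ∀ x ∈ closedBall 0 R, ∀ t ∈ Ico 0 T,
      u x t < barrier R T A B x t ∧ v x t < barrier R T A B x t := by
  have hlam1B : (4 * n + 8) * R ^ 2 + lam1 * A < B := by
    refine lt_of_le_of_lt ?_ hlamB
    gcongr
    exact le_max_left _ _
  have hlam2B : (4 * n + 8) * R ^ 2 + lam2 * A < B := by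
    refine lt_of_le_of_lt ?_ hlamB
    gcongr
    exact le_max_right _ _
  suffices ∀ x ∈ closedBall 0 R, ∀ t ∈ Ico 0 T,
      max (u x t - barrier R T A B x t) (v x t - barrier R T A B x t) < 0 by
    simpa only [max_lt_iff, sub_neg] using this
  refine neg_of_forall_nonpos_imp_neg (isCompact_closedBall _ _)
    ((hs.cont_u.sub (continuousOn_barrier hB)).sup (hs.cont_v.sub (continuousOn_barrier hB)))
    (by simpa only [max_lt_iff, sub_neg] using hinit) fun x hx t ht hle => ?_
  simp only [max_le_iff, sub_nonpos] at hle
  simp only [max_lt_iff, sub_neg]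
  rcases (mem_closedBall_zero_iff.1 hx).eq_or_lt with hxR | hxR
  · exact hsphere t ht x hxR
  · have hx' : x ∈ ball 0 R := mem_ball_zero_iff.2 hxR
    have hnow := hle x hx t ⟨ht.1.le, le_rfl⟩
    exact ⟨hs.lt_barrier_of_forall_le hA hB hlam1 hlam1B hx' ht
        (fun y hy s hs => (hle y hy s hs).1) hnow.2,
      hs.swap.lt_barrier_of_forall_le hA hB hlam2 hlam2B hx' ht
        (fun y hy s hs => (hle y hy s hs).2) hnow.1⟩

lemma exists_abs_le_of_lt_barrier (hs : IsClassicalSolution n R T lam1 lam2 u v u₀ v₀)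
    (hT : 0 < T) (hlam1 : 0 ≤ lam1) (hlam2 : 0 ≤ lam2) (hB : 0 ≤ B)
    (hlt : ∀ x ∈ closedBall 0 R, ∀ t ∈ Ico 0 T,
      u x t < barrier R T A B x t ∧ v x t < barrier R T A B x t)
    {K : Set (EuclideanSpace ℝ (Fin n))} (hK : IsCompact K) (hKR : K ⊆ ball 0 R) :
    ∃ M, ∀ x ∈ K, ∀ t ∈ Ioo 0 T, |u x t| ≤ M ∧ |v x t| ≤ M := by
  obtain ⟨mu, hmu⟩ := hs.exists_forall_le hT hlam1
  obtain ⟨mv, hmv⟩ := hs.swap.exists_forall_le hT hlam2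
  obtain ⟨M, hM⟩ := exists_barrier_le_of_isCompact (T := T) (A := A) hB hK hKR
  refine ⟨max M (max (-mu) (-mv)), fun x hx t ht => ?_⟩
  have hx' : x ∈ closedBall 0 R := ball_subset_closedBall (hKR hx)
  have ht' : t ∈ Ico 0 T := Ioo_subset_Ico_self ht
  have hMxt := hM x hx t ht.2.le
  have habs {w m : ℝ} (hw : w < barrier R T A B x t) (hm : m ≤ w)
      (hmv : -m ≤ max (-mu) (-mv)) : |w| ≤ max M (max (-mu) (-mv)) :=
    abs_le'.2 ⟨le_max_of_le_left (hw.le.trans hMxt),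
      le_max_of_le_right ((neg_le_neg hm).trans hmv)⟩
  exact ⟨habs (hlt x hx' t ht').1 (hmu x hx' t ht') (le_max_left _ _),
    habs (hlt x hx' t ht').2 (hmv x hx' t ht') (le_max_right _ _)⟩

end IsClassicalSolution

namespace IsBlowUpPoint

variable {n : ℕ} {R T : ℝ} {u v : EuclideanSpace ℝ (Fin n) → ℝ → ℝ}
  {x : EuclideanSpace ℝ (Fin n)}

lemma exists_gt_of_mem_nhds (h : IsBlowUpPoint n R T u v x) {s : Set (EuclideanSpace ℝ (Fin n))}
    (hs : s ∈ 𝓝 x) (M : ℝ) : ∃ y ∈ s, ∃ t ∈ Ioo 0 T, M < u y t ∨ M < v y t := by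
  obtain ⟨xs, ts, -, hts, hxs, -, hu | hv⟩ := h
  · obtain ⟨k, hk, hMk⟩ := ((hxs.eventually hs).and (hu.eventually_gt_atTop M)).exists
    exact ⟨xs k, hk, ts k, hts k, .inl hMk⟩
  · obtain ⟨k, hk, hMk⟩ := ((hxs.eventually hs).and (hv.eventually_gt_atTop M)).exists
    exact ⟨xs k, hk, ts k, hts k, .inr hMk⟩

lemma notMem_of_isOpen (h : IsBlowUpPoint n R T u v x) {U : Set (EuclideanSpace ℝ (Fin n))}
    (hU : IsOpen U) (hbdd : ∀ K, IsCompact K → K ⊆ U →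
      ∃ M : ℝ, ∀ y ∈ K, ∀ t ∈ Ioo 0 T, |u y t| ≤ M ∧ |v y t| ≤ M) : x ∉ U := by
  intro hx
  obtain ⟨K, hKx, hKU, hK⟩ := local_compact_nhds (hU.mem_nhds hx)
  obtain ⟨M, hM⟩ := hbdd K hK hKU
  obtain ⟨y, hy, t, ht, hMu | hMv⟩ := h.exists_gt_of_mem_nhds hKx M
  · exact hMu.not_ge ((le_abs_self _).trans (hM y hy t ht).1)
  · exact hMv.not_ge ((le_abs_self _).trans (hM y hy t ht).2)

end IsBlowUpPoint

theorem boundary_blowup_set_general {n : ℕ} {R T C Ku Kv : ℝ} (hT : 0 < T) :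
    ∃ lam0 : ℝ, 0 < lam0 ∧
      ∀ lam1 lam2 : ℝ, 0 ≤ lam1 → 0 ≤ lam2 →
      ∀ u v : EuclideanSpace ℝ (Fin n) → ℝ → ℝ, ∀ u₀ v₀ : EuclideanSpace ℝ (Fin n) → ℝ,
        IsClassicalSolution n R T lam1 lam2 u v u₀ v₀ →
        (∀ x ∈ closedBall 0 R, u₀ x ≤ Ku) →
        (∀ x ∈ closedBall 0 R, v₀ x ≤ Kv) →
        (∀ t ∈ Ioo 0 T, ∀ x : EuclideanSpace ℝ (Fin n), ‖x‖ = R →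
          Real.exp (u x t) ≤ C / (T - t) ∧ Real.exp (v x t) ≤ C / (T - t)) →
        max lam1 lam2 ≤ lam0 →
        (∀ K : Set (EuclideanSpace ℝ (Fin n)), IsCompact K → K ⊆ ball 0 R →
            ∃ M : ℝ, ∀ x ∈ K, ∀ t ∈ Ioo 0 T, |u x t| ≤ M ∧ |v x t| ≤ M) ∧
        (∀ x ∈ closedBall 0 R, IsBlowUpPoint n R T u v x → ‖x‖ = R) := by
  set B : ℝ := (4 * n + 8) * R ^ 2 + 2
  have hB : 0 < B := by positivity
  obtain ⟨A, hA_gt⟩ := exists_gt (max 0 (max (B * C) (Real.exp (max Ku Kv) * (R ^ 4 + B * T))))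
  obtain ⟨hA, hBC, hKA⟩ : 0 < A ∧ B * C < A ∧ Real.exp (max Ku Kv) * (R ^ 4 + B * T) < A := by
    simpa only [max_lt_iff] using hA_gt
  have hinit {x : EuclideanSpace ℝ (Fin n)} (hx : x ∈ closedBall 0 R) {w : ℝ}
      (hw : w ≤ max Ku Kv) : w < barrier R T A B x 0 :=
    lt_barrier_of_exp_mul_lt hA hB hT (mem_closedBall_zero_iff.1 hx) <|
      lt_of_le_of_lt (by rw [sub_zero]; gcongr) hKA
  refine ⟨1 / A, by positivity, fun lam1 lam2 hlam1 hlam2 u v u₀ v₀ hs hu₀ hv₀ hrate hmax => ?_⟩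
  have hlamB : (4 * n + 8) * R ^ 2 + max lam1 lam2 * A < B := by
    linarith [(le_div_iff₀ hA).1 hmax]
  have hlt := hs.lt_barrier hA hB hlam1 hlam2 hlamB
    (fun x hx => ⟨hinit hx (hs.init_u x hx ▸ le_max_of_le_left (hu₀ x hx)),
      hinit hx (hs.init_v x hx ▸ le_max_of_le_right (hv₀ x hx))⟩)
    (fun t ht x hx => (hrate t ht x hx).imp (lt_barrier_of_norm_eq hA hB hBC ht.2 hx)
      (lt_barrier_of_norm_eq hA hB hBC ht.2 hx))
  have hbdd := fun K => hs.exists_abs_le_of_lt_barrier (K := K) hT hlam1 hlam2 hB.le hlt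
  refine ⟨hbdd, fun x hx hblow => (mem_closedBall_zero_iff.1 hx).antisymm ?_⟩
  simpa using hblow.notMem_of_isOpen isOpen_ball hbdd

/-- Remark 4.2 (boundary blow-up set): there exists `λ₀ > 0`, depending only on `n, R, T`,
`‖u₀‖_∞`, `‖v₀‖_∞` (bounded here by `Ku`, `Kv`) and the constant `C` from the upper blow-up
rate estimate, such that for every blow-up solution with `max{λ₁,λ₂} ≤ λ₀`, `u` and `v`
are bounded on `K × (0,T)` for every compact `K ⊆ B_R`; consequently every blow-up point
lies on `∂B_R`. -/
theorem boundary_blowup_set {n : ℕ} (hn : 1 ≤ n) {R T C Ku Kv : ℝ}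
    (hR : 0 < R) (hT : 0 < T) (hC : 0 < C) :
    ∃ lam0 : ℝ, 0 < lam0 ∧
      ∀ lam1 lam2 : ℝ, 0 < lam1 → 0 < lam2 →
      ∀ u v : EuclideanSpace ℝ (Fin n) → ℝ → ℝ, ∀ u₀ v₀ : EuclideanSpace ℝ (Fin n) → ℝ,
        AdmissibleData n R u₀ v₀ →
        IsClassicalSolution n R T lam1 lam2 u v u₀ v₀ →
        BlowsUpAt n R T u v →
        (∀ x ∈ closedBall (0 : EuclideanSpace ℝ (Fin n)) R, |u₀ x| ≤ Ku) →
        (∀ x ∈ closedBall (0 : EuclideanSpace ℝ (Fin n)) R, |v₀ x| ≤ Kv) →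
        (∀ t ∈ Ioo (0 : ℝ) T, ∀ x : EuclideanSpace ℝ (Fin n), ‖x‖ = R →
          Real.exp (u x t) ≤ C / (T - t) ∧ Real.exp (v x t) ≤ C / (T - t)) →
        max lam1 lam2 ≤ lam0 →
        (∀ K : Set (EuclideanSpace ℝ (Fin n)), IsCompact K →
            K ⊆ ball (0 : EuclideanSpace ℝ (Fin n)) R →
            ∃ M : ℝ, ∀ x ∈ K, ∀ t ∈ Ioo (0 : ℝ) T, |u x t| ≤ M ∧ |v x t| ≤ M) ∧
        (∀ x ∈ closedBall (0 : EuclideanSpace ℝ (Fin n)) R,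
            IsBlowUpPoint n R T u v x → ‖x‖ = R) := by
  obtain ⟨lam0, hlam0, h⟩ := boundary_blowup_set_general (n := n) (R := R) (C := C) hT
  exact ⟨lam0, hlam0, fun lam1 lam2 hlam1 hlam2 u v u₀ v₀ _ hs _ hu₀ hv₀ =>
    h lam1 lam2 hlam1.le hlam2.le u v u₀ v₀ hs (fun x hx => (abs_le.1 (hu₀ x hx)).2)
      fun x hx => (abs_le.1 (hv₀ x hx)).2⟩
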